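/- Let S and g be measurable real-valued functions on I, each positive almost everywhere, with S, g, 1/g and g·S all integrable on I, and suppose there exists α > 0 such that g(ν) ≤ (2 − α)·⟨g⟩ for almost every ν ∈ I. Then ρ_fwd · ρ_bwd ≤ [1 + α · ∫_I ((g(ν) − ⟨g⟩)/⟨g⟩)² dν]⁻¹, where ρ_fwd := ⟨g·S⟩/(⟨S⟩·⟨g⟩) and ρ_bwd := ⟨S⟩/(⟨g·S⟩·⟨1/g⟩). Moreover, if g is not almost-everywhere constant on I, then this upper bound is strictly less than 1. -/

import Mathlib

open MeasureTheory

/-!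
Write `m = ⟨g⟩`. The integrals involving `S` cancel in the product of the two ratios, leaving
`(m ⟨1/g⟩)⁻¹`. Expanding the square gives the identity `m² ⟨1/g⟩ - m = ⟨(g - m)² / g⟩`, and
wherever `α g ≤ m` the right-hand integrand is at least `(α / m) (g - m)²`. So `m ⟨1/g⟩ - 1` is at
least `α` times the relative variance `⟨((g - m) / m)²⟩`. If `g ≤ (2 - α) m`, then indeed
`α g ≤ α (2 - α) m = m - (1 - α)² m ≤ m`.
-/

lemma mul_le_of_le_two_sub_mul {R : Type*} [CommRing R] [LinearOrder R] [IsStrictOrderedRing R]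
    {α y m : R} (hα : 0 ≤ α) (hm : 0 ≤ m) (hy : y ≤ (2 - α) * m) : α * y ≤ m :=
  calc
    α * y ≤ α * ((2 - α) * m) := mul_le_mul_of_nonneg_left hy hα
    _ = m - (1 - α) ^ 2 * m := by ring
    _ ≤ m := sub_le_self _ (by positivity)

lemma div_mul_mul_div_mul_eq_inv {G₀ : Type*} [CommGroupWithZero G₀] {a b : G₀} (ha : a ≠ 0)
    (hb : b ≠ 0) (c d : G₀) : a / (b * c) * (b / (a * d)) = (c * d)⁻¹ := by
  rw [div_mul_div_comm, mul_mul_mul_comm, mul_comm b a, div_mul_cancel_left₀ (mul_ne_zero ha hb)]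

section

open ProbabilityTheory

variable {Ω : Type*} [MeasurableSpace Ω] {μ : Measure Ω} {g : Ω → ℝ}

lemma integral_pos_of_ae_pos [NeZero μ] (hg : Integrable g μ) (hpos : ∀ᵐ x ∂μ, 0 < g x) :
    0 < ∫ x, g x ∂μ := by
  rw [integral_pos_iff_support_of_nonneg_ae (hpos.mono fun _ hx => hx.le) hg, pos_iff_ne_zero,
    ← frequently_ae_mem_iff]
  exact (hpos.mono fun _ hx => hx.ne').frequently

lemma sq_sub_const_div_ae_eq (hne : ∀ᵐ x ∂μ, g x ≠ 0) (c : ℝ) :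
    (fun x => (g x - c) ^ 2 / g x) =ᵐ[μ] fun x => g x - 2 * c + c ^ 2 * (1 / g x) := by
  filter_upwards [hne] with x hx
  field_simp
  ring

lemma integrable_sq_sub_const_div [IsFiniteMeasure μ] (hg : Integrable g μ)
    (hginv : Integrable (fun x => 1 / g x) μ) (hne : ∀ᵐ x ∂μ, g x ≠ 0) (c : ℝ) :
    Integrable (fun x => (g x - c) ^ 2 / g x) μ :=
  ((hg.sub (integrable_const _)).add (hginv.const_mul _)).congr (sq_sub_const_div_ae_eq hne c).symm

lemma integral_sq_sub_const_div [IsProbabilityMeasure μ] (hg : Integrable g μ)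
    (hginv : Integrable (fun x => 1 / g x) μ) (hne : ∀ᵐ x ∂μ, g x ≠ 0) (c : ℝ) :
    ∫ x, (g x - c) ^ 2 / g x ∂μ = ∫ x, g x ∂μ - 2 * c + c ^ 2 * ∫ x, 1 / g x ∂μ := by
  have hsub : Integrable (fun x => g x - 2 * c) μ := hg.sub (integrable_const _)
  rw [integral_congr_ae (sq_sub_const_div_ae_eq hne c), integral_add hsub (hginv.const_mul _),
    integral_sub hg (integrable_const _), integral_const, integral_const_mul, probReal_univ,
    one_smul]

lemma mul_variance_le_sq_integral_mul [IsProbabilityMeasure μ] (hg : Integrable g μ)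
    (hginv : Integrable (fun x => 1 / g x) μ) (hpos : ∀ᵐ x ∂μ, 0 < g x) {α : ℝ} (hα : 0 ≤ α)
    (hbound : ∀ᵐ x ∂μ, α * g x ≤ ∫ y, g y ∂μ) :
    α * Var[g; μ] ≤ (∫ x, g x ∂μ) ^ 2 * ((∫ x, g x ∂μ) * (∫ x, 1 / g x ∂μ) - 1) := by
  have hne : ∀ᵐ x ∂μ, g x ≠ 0 := hpos.mono fun _ hx => hx.ne'
  rw [variance_eq_integral hg.aemeasurable]
  set m := ∫ x, g x ∂μ with hm
  have hpointwise : ∀ᵐ x ∂μ, α * (g x - m) ^ 2 ≤ m * ((g x - m) ^ 2 / g x) := by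
    filter_upwards [hpos, hbound] with x hx hxm
    rw [mul_div_left_comm, mul_comm α]
    exact mul_le_mul_of_nonneg_left ((le_div_iff₀ hx).2 hxm) (sq_nonneg _)
  calc
    α * ∫ x, (g x - m) ^ 2 ∂μ = ∫ x, α * (g x - m) ^ 2 ∂μ := (integral_const_mul _ _).symm
    _ ≤ ∫ x, m * ((g x - m) ^ 2 / g x) ∂μ :=
      integral_mono_of_nonneg (.of_forall fun _ => by positivity)
        ((integrable_sq_sub_const_div hg hginv hne m).const_mul m) hpointwise
    _ = m ^ 2 * (m * (∫ x, 1 / g x ∂μ) - 1) := by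
      rw [integral_const_mul, integral_sq_sub_const_div hg hginv hne, ← hm]
      ring

lemma integral_sq_sub_integral_div_integral (hg : AEMeasurable g μ) :
    ∫ x, ((g x - ∫ y, g y ∂μ) / ∫ y, g y ∂μ) ^ 2 ∂μ = Var[g; μ] / (∫ x, g x ∂μ) ^ 2 := by
  simp only [div_pow, integral_div, variance_eq_integral hg]

lemma variance_pos_of_not_ae_const [IsFiniteMeasure μ] (hg : MemLp g 2 μ)
    (hconst : ¬ ∃ c : ℝ, g =ᵐ[μ] fun _ => c) : 0 < Var[g; μ] :=
  (variance_nonneg g μ).lt_of_ne' fun hzero =>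
    hconst ⟨_, ae_eq_integral_of_variance_eq_zero hg hzero⟩

theorem sdr_product_le_bound_general [IsProbabilityMeasure μ] {S : Ω → ℝ}
    (hgpos : ∀ᵐ x ∂μ, 0 < g x) (hg : Integrable g μ) (hginv : Integrable (fun x => 1 / g x) μ)
    (hS : ∫ x, S x ∂μ ≠ 0) (hgS : ∫ x, g x * S x ∂μ ≠ 0)
    {α : ℝ} (hα : 0 < α) (hbound : ∀ᵐ x ∂μ, α * g x ≤ ∫ y, g y ∂μ) :
    ((∫ x, g x * S x ∂μ) / ((∫ x, S x ∂μ) * ∫ x, g x ∂μ)) *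
        ((∫ x, S x ∂μ) / ((∫ x, g x * S x ∂μ) * ∫ x, 1 / g x ∂μ)) ≤
      (1 + α * ∫ x, ((g x - ∫ y, g y ∂μ) / ∫ y, g y ∂μ) ^ 2 ∂μ)⁻¹ ∧
    ((¬ ∃ c : ℝ, g =ᵐ[μ] fun _ => c) →
      (1 + α * ∫ x, ((g x - ∫ y, g y ∂μ) / ∫ y, g y ∂μ) ^ 2 ∂μ)⁻¹ < 1) := by
  have hmean : 0 < ∫ x, g x ∂μ := integral_pos_of_ae_pos hg hgpos
  have hvar : 0 ≤ Var[g; μ] := variance_nonneg g μ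
  rw [div_mul_mul_div_mul_eq_inv hgS hS, integral_sq_sub_integral_div_integral hg.aemeasurable]
  refine ⟨inv_anti₀ (by positivity) ?_, fun hconst => inv_lt_one_of_one_lt₀ ?_⟩
  · rw [← le_sub_iff_add_le', ← mul_div_assoc, div_le_iff₀' (by positivity)]
    exact mul_variance_le_sq_integral_mul hg hginv hgpos hα.le hbound
  · have hrange : ∀ᵐ x ∂μ, g x ∈ Set.Icc 0 ((∫ y, g y ∂μ) / α) := by
      filter_upwards [hgpos, hbound] with x hx hxm using ⟨hx.le, (le_div_iff₀' hα).2 hxm⟩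
    have hvarpos : 0 < Var[g; μ] :=
      variance_pos_of_not_ae_const (memLp_of_bounded hrange hg.aestronglyMeasurable 2) hconst
    exact lt_add_of_pos_right 1 (by positivity)

end

/-- Second part of the Forward–Backward Inequality (Proposition 2): if
`g ≤ (2 - α)·⟨g⟩` a.e. for some `α > 0`, then the product of the forward and
backward spectral dependency ratios is at most
`[1 + α ∫_I ((g - ⟨g⟩)/⟨g⟩)²]⁻¹`, and moreover this bound is strictly less
than `1` whenever `g` is not a.e. constant on `I = [-1/2, 1/2]`. -/
theorem sdr_product_le_bound
    (S g : ℝ → ℝ) (hSmeas : Measurable S) (hgmeas : Measurable g)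
    (μ : Measure ℝ) (hμ : μ = volume.restrict (Set.Icc (-(1 : ℝ) / 2) (1 / 2)))
    (hSpos : ∀ᵐ x ∂μ, 0 < S x) (hgpos : ∀ᵐ x ∂μ, 0 < g x)
    (hS : Integrable S μ) (hg : Integrable g μ)
    (hginv : Integrable (fun x => 1 / g x) μ)
    (hgS : Integrable (fun x => g x * S x) μ)
    (α : ℝ) (hα : 0 < α)
    (hbound : ∀ᵐ ν ∂μ, g ν ≤ (2 - α) * ∫ x, g x ∂μ) :
    ((∫ x, g x * S x ∂μ) / ((∫ x, S x ∂μ) * ∫ x, g x ∂μ)) *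
        ((∫ x, S x ∂μ) / ((∫ x, g x * S x ∂μ) * ∫ x, 1 / g x ∂μ)) ≤
      (1 + α * ∫ ν, ((g ν - ∫ x, g x ∂μ) / ∫ x, g x ∂μ) ^ 2 ∂μ)⁻¹ ∧
    ((¬ ∃ c : ℝ, g =ᵐ[μ] fun _ => c) →
      (1 + α * ∫ ν, ((g ν - ∫ x, g x ∂μ) / ∫ x, g x ∂μ) ^ 2 ∂μ)⁻¹ < 1) := by
  have hprob : IsProbabilityMeasure μ := ⟨by norm_num [hμ]⟩
  exact sdr_product_le_bound_general hgpos hg hginv (integral_pos_of_ae_pos hS hSpos).ne'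
    (integral_pos_of_ae_pos hgS (by filter_upwards [hgpos, hSpos] with x using mul_pos)).ne' hα
    (hbound.mono fun _ => mul_le_of_le_two_sub_mul hα.le (integral_pos_of_ae_pos hg hgpos).le)
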